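/- arXiv:1108.4400 — 15 statements merged into one kernel-verified Lean document; each statement's English description precedes it below -/
import Mathlib

section
/- A sequence (a_n) of real numbers is Cauchy if and only if for every ε > 0 and every function F : ℕ → ℕ there exists m ∈ ℕ such that |a_n − a_{n'}| < ε for all n, n' ∈ [m, F(m)]. -/
theorem stmt_1 (a : ℕ → ℝ) :
    CauchySeq a ↔
      ∀ ε : ℝ, 0 < ε → ∀ F : ℕ → ℕ, ∃ m : ℕ,
        ∀ n n', m ≤ n → n ≤ F m → m ≤ n' → n' ≤ F m →
          |a n - a n'| < ε := by
  rw [Metric.cauchySeq_iff]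
  simp only [Real.dist_eq]
  constructor
  · intro h ε hε F
    obtain ⟨N, hN⟩ := h ε hε
    exact ⟨N, fun n n' h1 _ h2 _ => hN n h1 n' h2⟩
  · intro h ε hε
    by_contra hc
    push Not at hc
    choose p hp q hq hpq using hc
    obtain ⟨m, hm⟩ := h ε hε (fun N => max (p N) (q N))
    exact absurd (hm (p m) (q m) (hp m) (le_max_left _ _) (hq m) (le_max_right _ _))
      (not_lt.mpr (hpq m))
end

section
/- Let (f_n) be a sequence of measurable real-valued functions on a measure space (X, B, μ). Then the statement 'for every λ > 0 and ε > 0 there exists m such that μ({x : ∃ n, n' ≥ m, |f_n(x) − f_{n'}(x)| ≥ ε}) < λ' holds if and only if the metastable statement 'for every λ > 0, ε > 0, and F : ℕ → ℕ there exists m such that μ({x : ∃ n, n' ∈ [m, F(m)], |f_n(x) − f_{n'}(x)| ≥ ε}) < λ' holds. -/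
open MeasureTheory

theorem stmt_3 {X : Type*} [MeasurableSpace X] (μ : Measure X)
    (f : ℕ → X → ℝ) (hf : ∀ n, Measurable (f n)) :
    (∀ lam : ℝ, 0 < lam → ∀ ε : ℝ, 0 < ε → ∃ m : ℕ,
        μ {x | ∃ n n', m ≤ n ∧ m ≤ n' ∧ ε ≤ |f n x - f n' x|} < ENNReal.ofReal lam) ↔
    (∀ lam : ℝ, 0 < lam → ∀ ε : ℝ, 0 < ε → ∀ F : ℕ → ℕ, ∃ m : ℕ,
        μ {x | ∃ n ∈ Set.Icc m (F m), ∃ n' ∈ Set.Icc m (F m),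
            ε ≤ |f n x - f n' x|} < ENNReal.ofReal lam) := by
  constructor
  · intro h lam hl ε hε F
    obtain ⟨m, hm⟩ := h lam hl ε hε
    refine ⟨m, lt_of_le_of_lt (measure_mono ?_) hm⟩
    rintro x ⟨n, hn, n', hn', hx⟩
    exact ⟨n, n', hn.1, hn'.1, hx⟩
  · intro h lam hl ε hε
    by_contra! hc
    have key : ∀ m : ℕ, ∃ k : ℕ, ENNReal.ofReal (lam / 2) <
        μ {x | ∃ n ∈ Set.Icc m k, ∃ n' ∈ Set.Icc m k, ε ≤ |f n x - f n' x|} := by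
      intro m
      have hmono : Monotone (fun k : ℕ =>
          {x | ∃ n ∈ Set.Icc m k, ∃ n' ∈ Set.Icc m k, ε ≤ |f n x - f n' x|}) := by
        rintro a b hab x ⟨n, hn, n', hn', hx⟩
        exact ⟨n, ⟨hn.1, hn.2.trans hab⟩, n', ⟨hn'.1, hn'.2.trans hab⟩, hx⟩
      have hU : {x | ∃ n n', m ≤ n ∧ m ≤ n' ∧ ε ≤ |f n x - f n' x|} ⊆ ⋃ k : ℕ,
          {x | ∃ n ∈ Set.Icc m k, ∃ n' ∈ Set.Icc m k, ε ≤ |f n x - f n' x|} := by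
        rintro x ⟨n, n', hn, hn', hx⟩
        exact Set.mem_iUnion.2 ⟨max n n', n, ⟨hn, le_max_left _ _⟩, n',
          ⟨hn', le_max_right _ _⟩, hx⟩
      have h1 : ENNReal.ofReal (lam / 2) < ENNReal.ofReal lam :=
        (ENNReal.ofReal_lt_ofReal_iff hl).2 (by linarith)
      have h2 := h1.trans_le ((hc m).trans (measure_mono hU))
      rw [hmono.measure_iUnion] at h2
      exact lt_iSup_iff.1 h2
    choose F hF using key
    obtain ⟨m, hm⟩ := h (lam / 2) (by linarith) ε hε F
    exact lt_asymm hm (hF m)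
end

section
/- For every functional M : (ℕ → ℕ) → ℕ there is a continuous functional M̄ : (ℕ → ℕ) → ℕ with the following property: for every F : ℕ → ℕ there exists F' : ℕ → ℕ such that M̄(F) = M(F') and F(j) = F'(j) for every j ≤ M̄(F). -/
theorem stmt_5 (M : (ℕ → ℕ) → ℕ) :
    ∃ Mbar : (ℕ → ℕ) → ℕ,
      (∀ F : ℕ → ℕ, ∃ k : ℕ, ∀ F' : ℕ → ℕ,
        (∀ j ≤ k, F' j = F j) → Mbar F' = Mbar F) ∧
      (∀ F : ℕ → ℕ, ∃ F' : ℕ → ℕ, Mbar F = M F' ∧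
        ∀ j ≤ Mbar F, F j = F' j) := by
  classical
  have hex : ∀ F : ℕ → ℕ, ∃ n, ∃ F' : ℕ → ℕ, n = M F' ∧ ∀ j ≤ n, F j = F' j :=
    fun F => ⟨M F, F, rfl, fun _ _ => rfl⟩
  refine ⟨fun F => Nat.find (hex F), ?_, fun F => Nat.find_spec (hex F)⟩
  intro F
  refine ⟨Nat.find (hex F), fun F' h => ?_⟩
  have hle : Nat.find (hex F') ≤ Nat.find (hex F) := by
    apply Nat.find_min'
    obtain ⟨G, hG, hj⟩ := Nat.find_spec (hex F)
    exact ⟨G, hG, fun j hjn => (h j hjn).trans (hj j hjn)⟩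
  apply le_antisymm hle
  apply Nat.find_min'
  obtain ⟨G, hG, hj⟩ := Nat.find_spec (hex F')
  exact ⟨G, hG, fun j hjn => (h j (hjn.trans hle)).symm.trans (hj j hjn)⟩
end

section
/- For every functional M : (ℕ → ℕ) → ℕ and all reals λ > λ' > 0, there exists M' ∈ ℕ with the following property: for every probability space (X, B, μ) and every sequence (A_n) of measurable subsets of X, if for every function F : ℕ → ℕ one has μ(⋂_{m ≤ M(F)} ⋃_{n ∈ [m, F(m)]} A_n) < λ', then there is an n ≤ M' such that μ(A_n) < λ. -/
open MeasureTheory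

theorem stmt_7_aux {X : Type} [MeasurableSpace X] (μ : Measure X) [IsProbabilityMeasure μ]
    (A : ℕ → Set X) (hA : ∀ n, MeasurableSet (A n)) (F : ℕ → ℕ) (L K : ℕ) (hL : L ≤ K)
    (hK : ∀ m ≤ L, F m ≤ K) (d : ℕ → ℝ)
    (hd : ∀ m ≤ L, μ.real (⋃ n ∈ Set.Icc m K, A n)
      ≤ μ.real (⋃ n ∈ Set.Icc m (F m), A n) + d m) :
    μ.real (A L) ≤ μ.real (⋂ m ≤ L, ⋃ n ∈ Set.Icc m (F m), A n)
      + ∑ m ∈ Finset.range (L + 1), d m := by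
  have hU : ∀ m N, MeasurableSet (⋃ n ∈ Set.Icc m N, A n) := fun m N =>
    MeasurableSet.biUnion (Set.to_countable _) fun n _ => hA n
  have hsub : A L ⊆ (⋂ m ≤ L, ⋃ n ∈ Set.Icc m (F m), A n) ∪
      ⋃ m ∈ Finset.range (L + 1),
        ((⋃ n ∈ Set.Icc m K, A n) \ (⋃ n ∈ Set.Icc m (F m), A n)) := by
    intro x hx
    by_cases h : x ∈ ⋂ m ≤ L, ⋃ n ∈ Set.Icc m (F m), A n
    · exact Or.inl h
    · right
      rw [Set.mem_iInter₂] at h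
      push Not at h
      obtain ⟨m, hm, hxm⟩ := h
      refine Set.mem_biUnion (x := m) (by simpa using Nat.lt_succ_of_le hm) ⟨?_, hxm⟩
      exact Set.mem_biUnion (x := L) ⟨hm, hL⟩ hx
  calc μ.real (A L) ≤ _ := measureReal_mono hsub
    _ ≤ _ := measureReal_union_le _ _
    _ ≤ _ := by
      gcongr
      refine (measureReal_biUnion_finset_le _ _).trans ?_
      refine Finset.sum_le_sum fun m hm => ?_
      have hm' : m ≤ L := by simpa [Nat.lt_succ_iff] using hm
      rw [measureReal_sdiff (h₁ := measure_ne_top _ _) _ (hU _ _)]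
      · linarith [hd m hm']
      · exact Set.biUnion_subset_biUnion_left (Set.Icc_subset_Icc_right (hK m hm'))

theorem stmt_7 (M : (ℕ → ℕ) → ℕ) (lam lam' : ℝ) (h1 : lam' < lam) (h2 : 0 < lam') :
    ∃ M' : ℕ, ∀ (X : Type) (_ : MeasurableSpace X) (μ : Measure X),
      IsProbabilityMeasure μ → ∀ A : ℕ → Set X, (∀ n, MeasurableSet (A n)) →
      (∀ F : ℕ → ℕ,
        μ (⋂ m ≤ M F, ⋃ n ∈ Set.Icc m (F m), A n) < ENNReal.ofReal lam') →
      ∃ n ≤ M', μ (A n) < ENNReal.ofReal lam := by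
  by_contra hcon
  push Not at hcon
  choose X mX μ hμ A hA hF hlam using hcon
  let U : Ultrafilter ℕ := Filter.hyperfilter ℕ
  have hlim : ∀ m N, ∃ g : ℝ, g ≤ 1 ∧ Filter.Tendsto
      (fun k => (μ k).real (⋃ n ∈ Set.Icc m N, A k n)) U (nhds g) := by
    intro m N
    obtain ⟨g, hg, hl⟩ := (isCompact_Icc (a := (0:ℝ)) (b := 1)).ultrafilter_le_nhds'
      (U.map (fun k => (μ k).real (⋃ n ∈ Set.Icc m N, A k n)))
      (by
        refine Filter.mem_map.2 (Filter.Eventually.of_forall fun k => ?_)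
        have := hμ k
        exact ⟨measureReal_nonneg, measureReal_le_one⟩)
    exact ⟨g, hg.2, hl⟩
  choose g hg1 hg using hlim
  set ε := lam - lam' with hε
  have hεpos : 0 < ε := sub_pos.2 h1
  let d : ℕ → ℝ := fun m => ε / 2 / 2 ^ m
  have hdpos : ∀ m, 0 < d m := fun m => by positivity
  have hex : ∀ m, ∃ N0, ∀ N, g m N < g m N0 + d m := by
    intro m
    have hb : BddAbove (Set.range (g m)) := ⟨1, by rintro _ ⟨N, rfl⟩; exact hg1 m N⟩
    obtain ⟨N0, hN0⟩ := exists_lt_of_lt_ciSup (sub_lt_self (⨆ N, g m N) (hdpos m))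
    exact ⟨N0, fun N => by linarith [le_ciSup hb N]⟩
  choose F hFm using hex
  let L := M F
  let K := L + ∑ m ∈ Finset.range (L + 1), F m
  have hK : ∀ m ≤ L, F m ≤ K := fun m hm =>
    (Finset.single_le_sum (f := F) (fun _ _ => Nat.zero_le _)
      (Finset.mem_range.2 (Nat.lt_succ_of_le hm))).trans (Nat.le_add_left _ _)
  have hev : ∀ᶠ k in (U : Filter ℕ), ∀ m ∈ Finset.range (L + 1),
      (μ k).real (⋃ n ∈ Set.Icc m K, A k n)
        < (μ k).real (⋃ n ∈ Set.Icc m (F m), A k n) + d m := by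
    rw [Filter.eventually_all_finset]
    intro m _
    exact (hg m K).eventually_lt ((hg m (F m)).add_const (d m)) (hFm m K)
  have hge : ∀ᶠ k in (U : Filter ℕ), L ≤ k := by
    have : (U : Filter ℕ) ≤ Filter.atTop := by
      rw [← Nat.cofinite_eq_atTop]; exact Filter.hyperfilter_le_cofinite
    exact this (Filter.eventually_ge_atTop L)
  obtain ⟨k, hk1, hk2⟩ := (hev.and hge).exists
  have := hμ k
  have key := stmt_7_aux (μ k) (A k) (hA k) F L K (Nat.le_add_right _ _) hK d
    (fun m hm => (hk1 m (Finset.mem_range.2 (Nat.lt_succ_of_le hm))).le)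
  have hsum : ∑ m ∈ Finset.range (L + 1), d m ≤ ε := by
    have hs : HasSum d ε := hasSum_geometric_two' ε
    exact sum_le_hasSum _ (fun m _ => (hdpos m).le) hs
  have ha : lam ≤ (μ k).real (A k L) := by
    have := hlam k L hk2
    exact (ENNReal.ofReal_le_iff_le_toReal (measure_ne_top _ _)).1 this
  have hb : (μ k).real (⋂ m ≤ L, ⋃ n ∈ Set.Icc m (F m), A k n) < lam' := by
    exact (ENNReal.lt_ofReal_iff_toReal_lt (measure_ne_top _ _)).1 (hF k F)
  linarith
end

section
/- Fix n ∈ ℕ and reals λ > λ' > 0, and let M : (ℕ → ℕ) → ℕ be the functional M(F) = F(0) + n. Then M' = n · ⌈1/(λ − λ')⌉ has the following property: for every probability space (X, B, μ) and every sequence (A_k) of measurable subsets of X, if for every function F : ℕ → ℕ one has μ(⋂_{m ≤ M(F)} ⋃_{k ∈ [m, F(m)]} A_k) < λ', then there is a k ≤ M' such that μ(A_k) < λ. -/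
open MeasureTheory

theorem stmt_8 (n : ℕ) (lam lam' : ℝ) (h1 : lam' < lam) (h2 : 0 < lam')
    (X : Type*) [MeasurableSpace X] (μ : Measure X) [IsProbabilityMeasure μ]
    (A : ℕ → Set X) (hA : ∀ k, MeasurableSet (A k))
    (hyp : ∀ F : ℕ → ℕ,
      μ (⋂ m ≤ F 0 + n, ⋃ k ∈ Set.Icc m (F m), A k) < ENNReal.ofReal lam') :
    ∃ k ≤ n * ⌈1 / (lam - lam')⌉.toNat, μ (A k) < ENNReal.ofReal lam := by
  by_contra hcon
  push Not at hcon
  set c := ⌈1 / (lam - lam')⌉.toNat with hc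
  have hd : 0 < lam - lam' := by linarith
  have hbig : ∀ k ≤ n * c, lam ≤ μ.real (A k) := fun k hk =>
    (ENNReal.ofReal_le_iff_le_toReal (measure_ne_top _ _)).1 (hcon k hk)
  let U : ℕ → Set X := fun p => ⋃ k ∈ Set.Icc 0 p, A k
  have hU : ∀ p, MeasurableSet (U p) := fun p =>
    MeasurableSet.biUnion (Set.to_countable _) (fun k _ => hA k)
  have hsmall : ∀ p, μ.real (A (p + n) ∩ U p) < lam' := by
    intro p
    have h := hyp (fun m => if m = 0 then p else p + n)
    have hsub : A (p + n) ∩ U p ⊆ ⋂ m ≤ (if (0:ℕ) = 0 then p else p + n) + n,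
        ⋃ k ∈ Set.Icc m (if m = 0 then p else p + n), A k := by
      rintro x ⟨hx1, hx2⟩
      simp only [Set.mem_iInter]
      intro m hm
      by_cases h0 : m = 0
      · subst h0
        simpa [U] using hx2
      · rw [if_neg h0]
        replace hm : m ≤ p + n := by simpa using hm
        exact Set.mem_biUnion (show p + n ∈ Set.Icc m (p + n) from ⟨hm, le_rfl⟩) hx1
    have h3 := lt_of_le_of_lt (measure_mono hsub) h
    exact (ENNReal.lt_ofReal_iff_toReal_lt (measure_ne_top _ _)).1 h3
  have key : ∀ i ≤ c, lam + i * (lam - lam') ≤ μ.real (U (n * i)) := by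
    intro i
    induction i with
    | zero =>
      intro _
      have : A 0 ⊆ U (n * 0) := Set.subset_biUnion_of_mem (u := A)
        (show 0 ∈ Set.Icc 0 (n * 0) by simp)
      have h := measureReal_mono (μ := μ) this (measure_ne_top _ _)
      have := hbig 0 (Nat.zero_le _)
      simp only [Nat.cast_zero, zero_mul, add_zero]
      linarith
    | succ i ih =>
      intro hi
      have ih := ih (by omega)
      have e : n * (i + 1) = n * i + n := by ring
      have hb := hbig (n * i + n) (by rw [← e]; exact Nat.mul_le_mul_left _ hi)
      have hs := hsmall (n * i)
      have hsub : U (n * i) ∪ A (n * i + n) ⊆ U (n * (i + 1)) := by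
        rw [e]
        apply Set.union_subset
        · exact Set.biUnion_subset_biUnion_left (Set.Icc_subset_Icc_right (by omega))
        · exact Set.subset_biUnion_of_mem (u := A)
            (show n * i + n ∈ Set.Icc 0 (n * i + n) by simp)
      have hm := measureReal_mono (μ := μ) hsub (measure_ne_top _ _)
      have hu := measureReal_union_add_inter (μ := μ) (s := U (n * i)) (hA (n * i + n))
        (measure_ne_top _ _) (measure_ne_top _ _)
      rw [Set.inter_comm] at hu
      push_cast
      linarith
  have hk := key c le_rfl
  have h4 : μ.real (U (n * c)) ≤ 1 := measureReal_le_one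
  have h5 : 1 / (lam - lam') ≤ (c : ℝ) := by
    refine (Int.le_ceil _).trans ?_
    exact_mod_cast Int.self_le_toNat _
  rw [div_le_iff₀ hd] at h5
  linarith
end

section
/- Fix n ∈ ℕ with n ≥ 1 and reals 1 > λ > λ' > 0, and let M : (ℕ → ℕ) → ℕ be the functional M(F) = F(0) + n. Then there exist a probability space (X, B, μ) and a sequence (A_k) of measurable subsets of X such that for every function F : ℕ → ℕ one has μ(⋂_{m ≤ M(F)} ⋃_{k ∈ [m, F(m)]} A_k) < λ', and yet μ(A_k) ≥ λ for every k < n · (⌈(1 − λ')/(λ − λ')⌉ − 1). -/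
open MeasureTheory

theorem stmt_9 (n : ℕ) (hn : 1 ≤ n) (lam lam' : ℝ)
    (h0 : 0 < lam') (h1 : lam' < lam) (h2 : lam < 1) :
    ∃ (X : Type) (_ : MeasurableSpace X) (μ : Measure X),
      IsProbabilityMeasure μ ∧
      ∃ A : ℕ → Set X, (∀ k, MeasurableSet (A k)) ∧
        (∀ F : ℕ → ℕ,
          μ (⋂ m ≤ F 0 + n, ⋃ k ∈ Set.Icc m (F m), A k) < ENNReal.ofReal lam') ∧
        (∀ k : ℕ, (k : ℤ) < (n : ℤ) * (⌈(1 - lam') / (lam - lam')⌉ - 1) →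
          ENNReal.ofReal lam ≤ μ (A k)) := by
  obtain ⟨K, hK⟩ : ∃ K : ℤ, K = ⌈(1 - lam') / (lam - lam')⌉ - 1 := ⟨_, rfl⟩
  rw [← hK]
  have hd : 0 < lam - lam' := by linarith
  have hK1 : (1 : ℤ) ≤ K := by
    have : (1 : ℤ) < ⌈(1 - lam') / (lam - lam')⌉ := by
      rw [Int.lt_ceil, lt_div_iff₀ hd]
      push_cast
      linarith
    omega
  have hK2 : (K : ℝ) * (lam - lam') < 1 - lam' := by
    have : K < ⌈(1 - lam') / (lam - lam')⌉ := by omega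
    rwa [Int.lt_ceil, lt_div_iff₀ hd] at this
  have hKr : (1 : ℝ) ≤ K := by exact_mod_cast hK1
  have hKp : (0 : ℝ) < K := by linarith
  obtain ⟨c, hc0, hc1, hc2⟩ : ∃ c : ℝ, 0 ≤ c ∧ c < lam' ∧ K * (lam - c) + c ≤ 1 := by
    have e1 : 0 < (1 - lam' - K * (lam - lam')) / K := div_pos (by linarith) hKp
    have e2 : K * ((1 - lam' - K * (lam - lam')) / K) = 1 - lam' - K * (lam - lam') := by
      field_simp
    generalize (1 - lam' - K * (lam - lam')) / K = e at e1 e2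
    refine ⟨lam' - min lam' e, ?_, ?_, ?_⟩
    · linarith [min_le_left lam' e]
    · linarith [lt_min h0 e1]
    · have := mul_le_mul_of_nonneg_left (min_le_right lam' e) hKp.le
      nlinarith [lt_min h0 e1]
  obtain ⟨d, hdd⟩ : ∃ d, d = lam - c := ⟨_, rfl⟩
  have hdp : 0 < d := by linarith
  rw [← hdd] at hc2
  let A : ℕ → Set ℝ := fun k =>
    Set.Ico 0 c ∪ Set.Ico (c + (k / n : ℕ) * d) (c + ((k / n : ℕ) + 1) * d)
  have hsep : ∀ i j x, i / n < j / n → x ∈ A i → x ∈ A j → x ∈ Set.Ico 0 c := by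
    intro i j x hij hi hj
    rcases hi with hi | hi
    · exact hi
    rcases hj with hj | hj
    · exact hj
    exfalso
    have h : ((i / n : ℕ) : ℝ) + 1 ≤ (j / n : ℕ) := by exact_mod_cast hij
    have := mul_le_mul_of_nonneg_right h hdp.le
    linarith [hi.2, hj.1]
  refine ⟨ℝ, inferInstance, volume.restrict (Set.Ico 0 1), ⟨by simp⟩, A, ?_, ?_, ?_⟩
  · intro k
    exact measurableSet_Ico.union measurableSet_Ico
  · intro F
    have hsub : (⋂ m ≤ F 0 + n, ⋃ k ∈ Set.Icc m (F m), A k) ⊆ Set.Ico 0 c := by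
      intro x hx
      simp only [Set.mem_iInter, Set.mem_iUnion] at hx
      obtain ⟨i, hi, hxi⟩ := hx 0 (Nat.zero_le _)
      obtain ⟨j, hj, hxj⟩ := hx (F 0 + n) le_rfl
      refine hsep i j x ?_ hxi hxj
      calc i / n < i / n + 1 := Nat.lt_succ_self _
        _ = (i + n) / n := (Nat.add_div_right i hn).symm
        _ ≤ j / n := Nat.div_le_div_right (by have := hi.2; have := hj.1; omega)
    calc _ ≤ (volume.restrict (Set.Ico (0:ℝ) 1)) (Set.Ico 0 c) := measure_mono hsub
      _ ≤ volume (Set.Ico 0 c) := Measure.restrict_apply_le _ _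
      _ = ENNReal.ofReal c := by simp
      _ < ENNReal.ofReal lam' := (ENNReal.ofReal_lt_ofReal_iff h0).2 hc1
  · intro k hk
    have hq : ((k / n : ℕ) : ℤ) + 1 ≤ K := by
      have hk' : k < n * K.toNat := by
        zify
        rwa [Int.toNat_of_nonneg (by omega)]
      have := Nat.div_lt_of_lt_mul hk'
      omega
    have hqr : ((k / n : ℕ) : ℝ) + 1 ≤ K := by
      have h := (Int.cast_le (R := ℝ)).2 hq
      rwa [Int.cast_add, Int.cast_natCast, Int.cast_one] at h
    have hm := mul_le_mul_of_nonneg_right hqr hdp.le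
    have hnn : (0 : ℝ) ≤ (k / n : ℕ) * d := by positivity
    have hAs : A k ⊆ Set.Ico 0 1 := by
      rintro x (hx | hx)
      · exact ⟨hx.1, by linarith [hx.2]⟩
      · exact ⟨by linarith [hx.1], by linarith [hx.2]⟩
    rw [Measure.restrict_eq_self _ hAs, measure_union _ measurableSet_Ico, Real.volume_Ico,
      Real.volume_Ico, ← ENNReal.ofReal_add (by linarith) (by linarith)]
    · apply ENNReal.ofReal_le_ofReal
      linarith
    · rw [Set.disjoint_left]
      intro x hx hx'
      linarith [hx.2, hx'.1]
end

section
/- For every ε > 0, reals λ > λ' > 0, and functional M₁ : (ℕ → ℕ) → ℕ, there exists a functional M₂ : (ℕ → ℕ) → ℕ with the following property: for every probability space (X, B, μ) and every sequence (f_n) of measurable real-valued functions on X, if for every F₁ : ℕ → ℕ one has μ({x : ∃ m ≤ M₁(F₁), ∀ n, n' ∈ [m, F₁(m)], |f_n(x) − f_{n'}(x)| < ε}) > 1 − λ', then for every F₂ : ℕ → ℕ there is an m ≤ M₂(F₂) such that μ({x : ∀ n, n' ∈ [m, F₂(m)], |f_n(x) − f_{n'}(x)| < ε}) > 1 − λ.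 -/
open MeasureTheory

theorem core_aux (lam δ : ℝ) (hδ : 0 < δ) (X : ℕ → Type) [∀ M, MeasurableSpace (X M)]
    (μ : ∀ M, Measure (X M)) [∀ M, IsProbabilityMeasure (μ M)]
    (E : ∀ M, ℕ → Set (X M)) (hE : ∀ M i, MeasurableSet (E M i))
    (hl : ∀ M i, i ≤ M → lam ≤ (μ M).real (E M i)) :
    ∃ G : ℕ → ℕ, ∀ K, ∃ M, lam - 2 * δ <
      (μ M).real {x | ∀ m ≤ K, ∃ i, m ≤ i ∧ i ≤ m + G m ∧ x ∈ E M i} + δ := by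
  classical
  let U : ∀ M, ℕ → ℕ → Set (X M) := fun M m k => {x | ∃ i, m ≤ i ∧ i ≤ m + k ∧ x ∈ E M i}
  have hU : ∀ M m k, MeasurableSet (U M m k) := by
    intro M m k
    have : U M m k = ⋃ i ∈ {i | m ≤ i ∧ i ≤ m + k}, E M i := by
      ext x; simp [U, and_assoc]
    rw [this]
    exact MeasurableSet.biUnion (Set.to_countable _) (fun i _ => hE M i)
  have hmono : ∀ M m k k', k ≤ k' → U M m k ⊆ U M m k' := by
    rintro M m k k' h x ⟨i, a, b, c⟩
    exact ⟨i, a, by omega, c⟩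
  have hlim : ∀ m k, ∃ p ∈ Set.Icc (0:ℝ) 1,
      Filter.Tendsto (fun M => (μ M).real (U M m k)) (Filter.hyperfilter ℕ : Filter ℕ) (nhds p) := by
    intro m k
    have := isCompact_Icc (a := (0:ℝ)) (b := 1) |>.ultrafilter_le_nhds
      ((Filter.hyperfilter ℕ).map (fun M => (μ M).real (U M m k))) (by
        rw [Filter.le_principal_iff]
        exact Filter.mem_map.2 (Filter.univ_mem' fun M => ⟨measureReal_nonneg, measureReal_le_one⟩))
    exact this
  choose p hp hpl using hlim
  have hG : ∀ m, ∃ k, ∀ N, p m N < p m k + δ * (1/2)^m := by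
    intro m
    have hb : BddAbove (Set.range (p m)) := ⟨1, by rintro _ ⟨k, rfl⟩; exact (hp m k).2⟩
    have hpos : 0 < δ * (1/2:ℝ)^m := by positivity
    obtain ⟨k, hk⟩ := exists_lt_of_lt_ciSup (f := p m) (sub_lt_self (⨆ k, p m k) hpos)
    refine ⟨k, fun N => ?_⟩
    have := le_ciSup hb N
    linarith
  choose G hG using hG
  refine ⟨G, fun K => ?_⟩
  have ev : ∀ᶠ M in (Filter.hyperfilter ℕ : Filter ℕ), K ≤ M ∧ ∀ m ∈ Finset.range (K+1),
      (μ M).real (U M m (K + G K)) < (μ M).real (U M m (G m)) + δ * (1/2)^m := by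
    refine Filter.Eventually.and
      ((Filter.eventually_ge_atTop K).filter_mono Nat.hyperfilter_le_atTop) ?_
    rw [Filter.eventually_all_finset]
    intro m _
    exact (hpl m (K + G K)).eventually_lt ((hpl m (G m)).add_const _) (hG m _)
  obtain ⟨M, hKM, hM⟩ := ev.exists
  refine ⟨M, ?_⟩
  have hsub : E M K ⊆ {x | ∀ m ≤ K, ∃ i, m ≤ i ∧ i ≤ m + G m ∧ x ∈ E M i} ∪
      ⋃ m ∈ Finset.range (K+1), (U M m (K + G K) \ U M m (G m)) := by
    intro x hx
    by_cases h : ∀ m ≤ K, ∃ i, m ≤ i ∧ i ≤ m + G m ∧ x ∈ E M i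
    · exact Or.inl h
    · right
      push Not at h
      obtain ⟨m, hm, h⟩ := h
      simp only [Set.mem_iUnion]
      refine ⟨m, by simp; omega, ⟨K, hm, by omega, hx⟩, ?_⟩
      rintro ⟨i, a, b, c⟩
      exact h i a b c
  have hd : ∀ m ∈ Finset.range (K+1),
      (μ M).real (U M m (K + G K) \ U M m (G m)) ≤ δ * (1/2)^m := by
    intro m hm
    rcases le_total (G m) (K + G K) with h | h
    · rw [measureReal_diff (hmono M m _ _ h) (hU M m _)]
      linarith [hM m hm]
    · rw [Set.diff_eq_empty.2 (hmono M m _ _ h)]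
      simp; positivity
  have e1 := measureReal_mono (μ := μ M) hsub
  have e2 := measureReal_union_le (μ := μ M)
    {x | ∀ m ≤ K, ∃ i, m ≤ i ∧ i ≤ m + G m ∧ x ∈ E M i}
    (⋃ m ∈ Finset.range (K+1), (U M m (K + G K) \ U M m (G m)))
  have e3 := measureReal_biUnion_finset_le (μ := μ M) (Finset.range (K+1))
    (fun m => U M m (K + G K) \ U M m (G m))
  have e4 := Finset.sum_le_sum hd
  rw [← Finset.mul_sum] at e4
  have e5 := mul_le_mul_of_nonneg_left (sum_geometric_two_le (K+1)) hδ.le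
  have e6 := hl M K hKM
  linarith

theorem stmt_10 (ε lam lam' : ℝ) (hε : 0 < ε) (h1 : lam' < lam) (h2 : 0 < lam')
    (M₁ : (ℕ → ℕ) → ℕ) :
    ∃ M₂ : (ℕ → ℕ) → ℕ, ∀ (X : Type) (_ : MeasurableSpace X) (μ : Measure X),
      IsProbabilityMeasure μ → ∀ f : ℕ → X → ℝ, (∀ n, Measurable (f n)) →
      (∀ F₁ : ℕ → ℕ,
        (μ {x | ∃ m ≤ M₁ F₁, ∀ n ∈ Set.Icc m (F₁ m), ∀ n' ∈ Set.Icc m (F₁ m),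
            |f n x - f n' x| < ε}).toReal > 1 - lam') →
      ∀ F₂ : ℕ → ℕ, ∃ m ≤ M₂ F₂,
        (μ {x | ∀ n ∈ Set.Icc m (F₂ m), ∀ n' ∈ Set.Icc m (F₂ m),
            |f n x - f n' x| < ε}).toReal > 1 - lam := by
  suffices H : ∀ F₂ : ℕ → ℕ, ∃ B : ℕ, ∀ (X : Type) (_ : MeasurableSpace X) (μ : Measure X),
      IsProbabilityMeasure μ → ∀ f : ℕ → X → ℝ, (∀ n, Measurable (f n)) →
      (∀ F₁ : ℕ → ℕ,
        (μ {x | ∃ m ≤ M₁ F₁, ∀ n ∈ Set.Icc m (F₁ m), ∀ n' ∈ Set.Icc m (F₁ m),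
            |f n x - f n' x| < ε}).toReal > 1 - lam') →
      ∃ m ≤ B,
        (μ {x | ∀ n ∈ Set.Icc m (F₂ m), ∀ n' ∈ Set.Icc m (F₂ m),
            |f n x - f n' x| < ε}).toReal > 1 - lam by
    choose M₂ hM₂ using H
    exact ⟨M₂, fun X mX μ hμ f hf h F₂ => hM₂ F₂ X mX μ hμ f hf h⟩
  intro F₂
  by_contra! hcon
  choose X mX μ hμ f hf hh hbad using hcon
  let S : ∀ M, ℕ → Set (X M) := fun M m =>
    {x | ∀ n ∈ Set.Icc m (F₂ m), ∀ n' ∈ Set.Icc m (F₂ m), |f M n x - f M n' x| < ε}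
  have hS : ∀ (F : ℕ → ℕ) M m, MeasurableSet {x | ∀ n ∈ Set.Icc m (F m),
      ∀ n' ∈ Set.Icc m (F m), |f M n x - f M n' x| < ε} := by
    intro F M m
    simp only [Set.setOf_forall]
    refine MeasurableSet.iInter fun n => MeasurableSet.iInter fun _ =>
      MeasurableSet.iInter fun n' => MeasurableSet.iInter fun _ => ?_
    have : Measurable fun x => |f M n x - f M n' x| := by
      simpa [Real.norm_eq_abs] using ((hf M n).sub (hf M n')).norm
    exact measurableSet_lt this measurable_const
  obtain ⟨G, hG⟩ := core_aux lam ((lam - lam') / 3) (by linarith) X μ (fun M i => (S M i)ᶜ)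
    (fun M i => (hS F₂ M i).compl) (by
      intro M i hi
      rw [probReal_compl_eq_one_sub (hS F₂ M i)]
      have := hbad M i hi
      change (μ M).real (S M i) ≤ _ at this
      linarith)
  let F₁ : ℕ → ℕ := fun m => (Finset.Icc m (m + G m)).sup F₂
  obtain ⟨M, hM⟩ := hG (M₁ F₁)
  have hA := hh M F₁
  change (μ M).real _ > _ at hA
  set A := {x | ∃ m ≤ M₁ F₁, ∀ n ∈ Set.Icc m (F₁ m), ∀ n' ∈ Set.Icc m (F₁ m),
            |f M n x - f M n' x| < ε} with hAdef
  have hAm : MeasurableSet A := by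
    have : A = ⋃ m ∈ {m | m ≤ M₁ F₁}, {x | ∀ n ∈ Set.Icc m (F₁ m),
      ∀ n' ∈ Set.Icc m (F₁ m), |f M n x - f M n' x| < ε} := by
      ext x; simp [hAdef]
    rw [this]
    exact MeasurableSet.biUnion (Set.to_countable _) (fun i _ => hS F₁ M i)
  have hsub : {x | ∀ m ≤ M₁ F₁, ∃ i, m ≤ i ∧ i ≤ m + G m ∧ x ∈ (S M i)ᶜ} ⊆ Aᶜ := by
    rintro x hx ⟨m, hm, h⟩
    obtain ⟨i, a, b, c⟩ := hx m hm
    apply c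
    have hle : F₂ i ≤ F₁ m := Finset.le_sup (f := F₂) (Finset.mem_Icc.2 ⟨a, b⟩)
    intro n hn n' hn'
    exact h n ⟨a.trans hn.1, hn.2.trans hle⟩ n' ⟨a.trans hn'.1, hn'.2.trans hle⟩
  have e := measureReal_mono (μ := μ M) hsub
  rw [probReal_compl_eq_one_sub hAm] at e
  linarith
end

section
/- For every ε > 0, reals λ > λ' > 0, and functional M₁ : (ℕ → ℕ) → ℕ, there exists a functional M₂ : (ℕ → ℕ) → ℕ with the following property: for every probability space (X, B, μ) and every sequence (f_n) of measurable functions on X with 0 ≤ f_n(x) ≤ 1 for all n and x, if for every F : ℕ → ℕ one has μ({x : ∃ m ≤ M₁(F), ∀ n, n' ∈ [m, F(m)], |f_n(x) − f_{n'}(x)| < ε}) > 1 − λ', then for every F : ℕ → ℕ there is an m ≤ M₂(F) such that |∫ f_n dμ − ∫ f_{n'} dμ| < ε + λ for all n, n' ∈ [m, F(m)]. -/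
open MeasureTheory

/-- Along an ultrafilter, one can choose nearly optimal stages. -/
lemma exists_stage (U : Ultrafilter ℕ) (a : ℕ → ℕ → ℕ → ℝ)
    (ha : ∀ M m k, a M m k ∈ Set.Icc (0 : ℝ) 1) (η : ℕ → ℝ) (hη : ∀ m, 0 < η m) :
    ∃ G : ℕ → ℕ, ∀ m k, ∀ᶠ M in (U : Filter ℕ), a M m k < a M m (G m) + 3 * η m := by
  have hp : ∀ m k, ∃ p : ℝ, p ∈ Set.Icc (0 : ℝ) 1 ∧
      Filter.Tendsto (fun M => a M m k) (U : Filter ℕ) (nhds p) := by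
    intro m k
    obtain ⟨p, hp, hle⟩ := isCompact_Icc.ultrafilter_le_nhds (s := Set.Icc (0 : ℝ) 1)
      (U.map (fun M => a M m k)) (by
        rw [Filter.le_principal_iff]
        exact Filter.mem_map.2 (Filter.univ_mem' (fun M => ha M m k)))
    exact ⟨p, hp, hle⟩
  choose p hp01 hp using hp
  have hG : ∀ m, ∃ g, ∀ k, p m k < p m g + η m := by
    intro m
    have hb : BddAbove (Set.range (p m)) := ⟨1, by rintro _ ⟨k, rfl⟩; exact (hp01 m k).2⟩
    obtain ⟨g, hg⟩ := exists_lt_of_lt_ciSup (f := p m) (b := (⨆ k, p m k) - η m)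
      (by linarith [hη m])
    exact ⟨g, fun k => by linarith [le_ciSup hb k]⟩
  choose G hG using hG
  refine ⟨G, fun m k => ?_⟩
  have h1 := (hp m k).eventually (gt_mem_nhds (show p m k < p m k + η m by linarith [hη m]))
  have h2 := (hp m (G m)).eventually
    (lt_mem_nhds (show p m (G m) - η m < p m (G m) by linarith [hη m]))
  filter_upwards [h1, h2] with M h1 h2
  linarith [hG m k]

/-- Oscillation set. -/
def oscSet {X : Type} (ε : ℝ) (f : ℕ → X → ℝ) (m k : ℕ) : Set X :=
  {x | ∃ n ∈ Set.Icc m k, ∃ n' ∈ Set.Icc m k, ε ≤ |f n x - f n' x|}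

lemma measurableSet_oscSet {X : Type} [MeasurableSpace X] (ε : ℝ) (f : ℕ → X → ℝ)
    (hf : ∀ n, Measurable (f n)) (m k : ℕ) : MeasurableSet (oscSet ε f m k) := by
  have : oscSet ε f m k = ⋃ n ∈ Set.Icc m k, ⋃ n' ∈ Set.Icc m k,
      {x | ε ≤ |f n x - f n' x|} := by
    ext x; simp only [oscSet, Set.mem_iUnion, exists_prop]; rfl
  rw [this]
  refine MeasurableSet.biUnion (Set.to_countable _) fun n _ =>
    MeasurableSet.biUnion (Set.to_countable _) fun n' _ => ?_
  have h : Measurable fun x => |f n x - f n' x| := by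
    have := ((hf n).sub (hf n')).norm
    simpa [Real.norm_eq_abs] using this
  exact measurableSet_le measurable_const h

lemma oscSet_mono {X : Type} (ε : ℝ) (f : ℕ → X → ℝ) {m m' k k' : ℕ} (h : m' ≤ m)
    (hk : k ≤ k') : oscSet ε f m k ⊆ oscSet ε f m' k' := by
  rintro x ⟨n, hn, n', hn', h'⟩
  exact ⟨n, ⟨h.trans hn.1, hn.2.trans hk⟩, n', ⟨h.trans hn'.1, hn'.2.trans hk⟩, h'⟩

lemma integral_bound {X : Type} [MeasurableSpace X] (μ : Measure X) [IsProbabilityMeasure μ]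
    (ε : ℝ) (hε : 0 < ε) (f : ℕ → X → ℝ) (hf : ∀ n, Measurable (f n))
    (hb : ∀ n x, 0 ≤ f n x ∧ f n x ≤ 1) (m k n n' : ℕ) (hn : n ∈ Set.Icc m k)
    (hn' : n' ∈ Set.Icc m k) :
    |∫ x, f n x ∂μ - ∫ x, f n' x ∂μ| ≤ ε + μ.real (oscSet ε f m k) := by
  have hi : ∀ n, Integrable (f n) μ := fun n =>
    Integrable.of_bound (hf n).aestronglyMeasurable 1 (Filter.Eventually.of_forall fun x => by
      rw [Real.norm_eq_abs, abs_of_nonneg (hb n x).1]; exact (hb n x).2)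
  have hB := measurableSet_oscSet ε f hf m k
  have hind : Integrable ((oscSet ε f m k).indicator (fun _ => (1 : ℝ))) μ :=
    (integrable_const 1).indicator hB
  rw [← integral_sub (hi n) (hi n')]
  calc |∫ x, (f n x - f n' x) ∂μ| ≤ ∫ x, |f n x - f n' x| ∂μ := abs_integral_le_integral_abs
    _ ≤ ∫ x, (ε + (oscSet ε f m k).indicator (fun _ => (1 : ℝ)) x) ∂μ := by
        refine integral_mono ((hi n).sub (hi n')).abs ((integrable_const ε).add hind) fun x => ?_
        by_cases hx : x ∈ oscSet ε f m k
        · simp only [Set.indicator_of_mem hx]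
          have := hb n x
          have := hb n' x
          have : |f n x - f n' x| ≤ 1 := abs_le.2 ⟨by linarith, by linarith⟩
          linarith
        · simp only [Set.indicator_of_notMem hx]
          have : |f n x - f n' x| < ε := by
            by_contra h
            exact hx ⟨n, hn, n', hn', not_lt.1 h⟩
          linarith
    _ = ε + μ.real (oscSet ε f m k) := by
        rw [integral_add (integrable_const ε) hind, integral_indicator hB]
        simp

theorem stmt_11 (ε lam lam' : ℝ) (hε : 0 < ε) (h1 : lam' < lam) (h2 : 0 < lam')
    (M₁ : (ℕ → ℕ) → ℕ) :
    ∃ M₂ : (ℕ → ℕ) → ℕ, ∀ (X : Type) (_ : MeasurableSpace X) (μ : Measure X),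
      IsProbabilityMeasure μ → ∀ f : ℕ → X → ℝ, (∀ n, Measurable (f n)) →
      (∀ n x, 0 ≤ f n x ∧ f n x ≤ 1) →
      (∀ F : ℕ → ℕ,
        (μ {x | ∃ m ≤ M₁ F, ∀ n ∈ Set.Icc m (F m), ∀ n' ∈ Set.Icc m (F m),
            |f n x - f n' x| < ε}).toReal > 1 - lam') →
      ∀ F : ℕ → ℕ, ∃ m ≤ M₂ F,
        ∀ n ∈ Set.Icc m (F m), ∀ n' ∈ Set.Icc m (F m),
          |∫ x, f n x ∂μ - ∫ x, f n' x ∂μ| < ε + lam := by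
  suffices H : ∀ F : ℕ → ℕ, ∃ M : ℕ, ∀ (X : Type) (_ : MeasurableSpace X) (μ : Measure X),
      IsProbabilityMeasure μ → ∀ f : ℕ → X → ℝ, (∀ n, Measurable (f n)) →
      (∀ n x, 0 ≤ f n x ∧ f n x ≤ 1) →
      (∀ F : ℕ → ℕ,
        (μ {x | ∃ m ≤ M₁ F, ∀ n ∈ Set.Icc m (F m), ∀ n' ∈ Set.Icc m (F m),
            |f n x - f n' x| < ε}).toReal > 1 - lam') →
      ∃ m ≤ M, ∀ n ∈ Set.Icc m (F m), ∀ n' ∈ Set.Icc m (F m),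
          |∫ x, f n x ∂μ - ∫ x, f n' x ∂μ| < ε + lam by
    choose M₂ hM₂ using H
    exact ⟨M₂, fun X mX μ hμ f hf hb h F => hM₂ F X mX μ hμ f hf hb h⟩
  intro F
  by_contra hcon
  simp only [not_exists, not_forall] at hcon
  choose X mX μ hμ f hf hb hM hbad using hcon
  obtain ⟨G, hG⟩ := exists_stage (Filter.hyperfilter ℕ)
    (fun M m k => (μ M).real (oscSet ε (f M) m k))
    (fun M m k => ⟨measureReal_nonneg, measureReal_le_one⟩)
    (fun m => (lam - lam') / 6 * (1 / 2) ^ m)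
    (fun m => by have : 0 < lam - lam' := by linarith
                 positivity)
  set N := M₁ G with hN
  set k := F N + ∑ m ∈ Finset.range (N + 1), G m with hk
  have hGk : ∀ m ∈ Finset.range (N + 1), G m ≤ k := fun m hm =>
    (Finset.single_le_sum (f := G) (fun _ _ => Nat.zero_le _) hm).trans (Nat.le_add_left _ _)
  have hev : ∀ᶠ M in (Filter.hyperfilter ℕ : Filter ℕ), ∀ m ∈ Finset.range (N + 1),
      (μ M).real (oscSet ε (f M) m k) < (μ M).real (oscSet ε (f M) m (G m))
        + 3 * ((lam - lam') / 6 * (1 / 2) ^ m) :=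
    (Filter.eventually_all_finset _).2 fun m _ => hG m k
  have hge : ∀ᶠ M in (Filter.hyperfilter ℕ : Filter ℕ), N ≤ M := by
    refine Filter.Eventually.filter_mono Filter.hyperfilter_le_cofinite ?_
    rw [Nat.cofinite_eq_atTop]
    exact Filter.eventually_ge_atTop N
  obtain ⟨M, hM1, hM2⟩ := (hev.and hge).exists
  refine hbad M N ⟨hM2, fun n hn n' hn' => ?_⟩
  have hsub : Set.Icc N (F N) ⊆ Set.Icc N k := Set.Icc_subset_Icc_right (Nat.le_add_right _ _)
  refine (integral_bound (μ M) ε hε (f M) (hf M) (hb M) N k n n' (hsub hn) (hsub hn')).trans_lt ?_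
  have hms := fun m k => measurableSet_oscSet ε (f M) (hf M) m k
  -- the set of bad points for `G`
  set S := {x | ∃ m ≤ M₁ G, ∀ n ∈ Set.Icc m (G m), ∀ n' ∈ Set.Icc m (G m),
            |f M n x - f M n' x| < ε} with hS
  have hSc : S = ⋃ m ∈ Finset.range (N + 1), (oscSet ε (f M) m (G m))ᶜ := by
    ext x
    simp only [hS, oscSet, Set.mem_ofPred_eq, Set.mem_iUnion, Set.mem_compl_iff, Finset.mem_range,
      Nat.lt_succ_iff, exists_prop, not_exists, not_and, not_le]
    rfl
  have hSm : MeasurableSet S := by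
    rw [hSc]
    exact Finset.measurableSet_biUnion _ fun m _ => (hms m _).compl
  have hSl : (μ M).real Sᶜ < lam' := by
    have h := hM M G
    have h' : (μ M).real S > 1 - lam' := h
    rw [probReal_compl_eq_one_sub hSm]
    linarith
  have hcover : oscSet ε (f M) N k ⊆ Sᶜ ∪ ⋃ m ∈ Finset.range (N + 1),
      (oscSet ε (f M) m k \ oscSet ε (f M) m (G m)) := by
    intro x hx
    by_cases hxS : x ∈ S
    · right
      rw [hSc] at hxS
      simp only [Set.mem_iUnion] at hxS ⊢
      obtain ⟨m, hm, hxm⟩ := hxS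
      exact ⟨m, hm, oscSet_mono ε (f M) (Nat.lt_succ_iff.1 (Finset.mem_range.1 hm)) le_rfl hx, hxm⟩
    · exact Or.inl hxS
  have hsum : ∑ m ∈ Finset.range (N + 1),
      (μ M).real (oscSet ε (f M) m k \ oscSet ε (f M) m (G m)) ≤ lam - lam' := by
    calc _ ≤ ∑ m ∈ Finset.range (N + 1), (lam - lam') / 2 * (1 / 2 : ℝ) ^ m := by
          refine Finset.sum_le_sum fun m hm => ?_
          rw [measureReal_sdiff (oscSet_mono ε (f M) le_rfl (hGk m hm)) (hms m _)]
          have := hM1 m hm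
          linarith
      _ = (lam - lam') / 2 * ∑ m ∈ Finset.range (N + 1), (1 / 2 : ℝ) ^ m := by
          rw [Finset.mul_sum]
      _ ≤ (lam - lam') / 2 * 2 :=
          mul_le_mul_of_nonneg_left (sum_geometric_two_le _) (by linarith)
      _ = lam - lam' := by ring
  have hle : (μ M).real (oscSet ε (f M) N k) ≤ (μ M).real Sᶜ + ∑ m ∈ Finset.range (N + 1),
      (μ M).real (oscSet ε (f M) m k \ oscSet ε (f M) m (G m)) :=
    (measureReal_mono hcover).trans ((measureReal_union_le _ _).trans
      (add_le_add le_rfl (measureReal_biUnion_finset_le _ _)))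
  linarith
end

section
/- Let (f_n) be a sequence of measurable real-valued functions on a measure space (X, B, μ). If (f_n) converges almost uniformly, then (f_n) converges AUM. -/
open MeasureTheory

theorem stmt_13 {X : Type*} [MeasurableSpace X] (μ : Measure X)
    (f : ℕ → X → ℝ) (hf : ∀ n, Measurable (f n))
    (hAU : ∀ lam : ℝ, 0 < lam → ∃ A : Set X, MeasurableSet A ∧
      μ A ≤ ENNReal.ofReal lam ∧
      ∀ ε : ℝ, 0 < ε → ∃ m : ℕ, ∀ n n', m ≤ n → m ≤ n' →
        ∀ x ∈ Aᶜ, |f n x - f n' x| < ε) :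
    ∀ lam : ℝ, 0 < lam → ∀ ε : ℝ, 0 < ε → ∀ F : ℕ → ℕ, ∃ M : ℕ,
      μ {x | ∀ m ≤ M, ∃ n ∈ Set.Icc m (F m), ∃ n' ∈ Set.Icc m (F m),
          ε ≤ |f n x - f n' x|} < ENNReal.ofReal lam := by
  intro lam hlam ε hε F
  obtain ⟨A, -, hA, h⟩ := hAU (lam / 2) (by positivity)
  obtain ⟨m, hm⟩ := h ε hε
  refine ⟨m, lt_of_le_of_lt ((measure_mono ?_).trans hA) ?_⟩
  · intro x hx
    by_contra hxA
    obtain ⟨n, hn, n', hn', hle⟩ := hx m le_rfl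
    exact absurd (hm n n' hn.1 hn'.1 x hxA) (not_lt.mpr hle)
  · exact (ENNReal.ofReal_lt_ofReal_iff hlam).mpr (by linarith)
end

section
/- Let (f_n) be a sequence of measurable real-valued functions on a measure space (X, B, μ). If (f_n) converges AUM, then (f_n) converges pointwise almost everywhere, i.e., for almost every x the sequence (f_n(x)) is Cauchy. -/
open MeasureTheory

theorem aum_null {X : Type*} [MeasurableSpace X] (μ : Measure X)
    (f : ℕ → X → ℝ) (ε : ℝ) (hε : 0 < ε)
    (hAUM : ∀ lam : ℝ, 0 < lam → ∀ ε : ℝ, 0 < ε → ∀ F : ℕ → ℕ, ∃ M : ℕ,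
      μ {x | ∀ m ≤ M, ∃ n ∈ Set.Icc m (F m), ∃ n' ∈ Set.Icc m (F m),
          ε ≤ |f n x - f n' x|} < ENNReal.ofReal lam) :
    μ {x | ∀ m, ∃ n ≥ m, ∃ n' ≥ m, ε ≤ |f n x - f n' x|} = 0 := by
  by_contra hne
  set E := {x | ∀ m, ∃ n ≥ m, ∃ n' ≥ m, ε ≤ |f n x - f n' x|} with hE
  obtain ⟨c, hc0, hcE⟩ := exists_between (pos_iff_ne_zero.mpr hne)
  have hctop : c ≠ ⊤ := hcE.ne_top
  let B : ℕ → ℕ → Set X := fun m k => {x | ∃ n ∈ Set.Icc m k, ∃ n' ∈ Set.Icc m k,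
          ε ≤ |f n x - f n' x|}
  have step : ∀ (m : ℕ) (S : Set X), ∃ k, S ⊆ E → c < μ S → c < μ (S ∩ B m k) := by
    intro m S
    by_cases h : S ⊆ E ∧ c < μ S
    · obtain ⟨hS, hc⟩ := h
      have hmono : Monotone (fun k => S ∩ B m k) := by
        rintro k l hkl x ⟨hx, n, hn, n', hn', h⟩
        exact ⟨hx, n, ⟨hn.1, hn.2.trans hkl⟩, n', ⟨hn'.1, hn'.2.trans hkl⟩, h⟩
      have hU : (⋃ k, S ∩ B m k) = S := by
        ext x
        simp only [Set.mem_iUnion]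
        constructor
        · rintro ⟨k, hx, _⟩
          exact hx
        · intro hx
          obtain ⟨n, hn, n', hn', h⟩ := hS hx m
          exact ⟨max n n', hx, n, ⟨hn, le_max_left _ _⟩, n', ⟨hn', le_max_right _ _⟩, h⟩
      rw [← hU, hmono.measure_iUnion, lt_iSup_iff] at hc
      obtain ⟨k, hk⟩ := hc
      exact ⟨k, fun _ _ => hk⟩
    · exact ⟨0, fun h1 h2 => absurd ⟨h1, h2⟩ h⟩
  choose k hk using step
  let S : ℕ → Set X := fun m => Nat.rec E (fun m T => T ∩ B m (k m T)) m
  have hS1 : ∀ m, S (m+1) = S m ∩ B m (k m (S m)) := fun m => rfl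
  have hSE : ∀ m, S m ⊆ E ∧ c < μ (S m) := by
    intro m
    induction m with
    | zero => exact ⟨subset_rfl, hcE⟩
    | succ m ih =>
      rw [hS1]
      exact ⟨Set.inter_subset_left.trans ih.1, hk m _ ih.1 ih.2⟩
  have hanti : Antitone S := antitone_nat_of_succ_le (fun m => by
    rw [hS1]; exact Set.inter_subset_left)
  obtain ⟨M, hM⟩ := hAUM c.toReal (ENNReal.toReal_pos hc0.ne' hctop) ε hε (fun m => k m (S m))
  rw [ENNReal.ofReal_toReal hctop] at hM
  refine lt_asymm hM ((hSE (M+1)).2.trans_le (measure_mono ?_))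
  intro x hx m hm
  have := hanti (Nat.succ_le_succ hm) hx
  rw [Nat.succ_eq_add_one, hS1] at this
  exact this.2

theorem stmt_14 {X : Type*} [MeasurableSpace X] (μ : Measure X)
    (f : ℕ → X → ℝ) (hf : ∀ n, Measurable (f n))
    (hAUM : ∀ lam : ℝ, 0 < lam → ∀ ε : ℝ, 0 < ε → ∀ F : ℕ → ℕ, ∃ M : ℕ,
      μ {x | ∀ m ≤ M, ∃ n ∈ Set.Icc m (F m), ∃ n' ∈ Set.Icc m (F m),
          ε ≤ |f n x - f n' x|} < ENNReal.ofReal lam) :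
    ∀ᵐ x ∂μ, CauchySeq (fun n => f n x) := by
  have h : ∀ᵐ x ∂μ, ∀ j : ℕ,
      ¬ ∀ m, ∃ n ≥ m, ∃ n' ≥ m, 1 / ((j : ℝ) + 1) ≤ |f n x - f n' x| := by
    rw [ae_all_iff]
    intro j
    rw [ae_iff]
    simpa only [not_not] using aum_null μ f (1 / ((j : ℝ) + 1)) (by positivity) hAUM
  filter_upwards [h] with x hx
  rw [Metric.cauchySeq_iff]
  intro ε hε
  obtain ⟨j, hj⟩ := exists_nat_one_div_lt hε
  have := hx j
  push Not at this
  obtain ⟨m, hm⟩ := this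
  refine ⟨m, fun n hn n' hn' => ?_⟩
  rw [Real.dist_eq]
  exact (hm n hn n' hn').trans hj
end

section
/- Let (f_n) be a sequence of measurable real-valued functions on a measure space (X, B, μ) such that μ({x : |f_n(x) − f_{n'}(x)| ≥ ε}) < ∞ for every ε > 0 and all n, n'. If (f_n) converges pointwise almost everywhere (i.e., for almost every x the sequence (f_n(x)) is Cauchy), then (f_n) converges AUM. -/
open MeasureTheory

theorem stmt_15 {X : Type*} [MeasurableSpace X] (μ : Measure X)
    (f : ℕ → X → ℝ) (hf : ∀ n, Measurable (f n))
    (hfin : ∀ ε : ℝ, 0 < ε → ∀ n n' : ℕ,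
      μ {x | ε ≤ |f n x - f n' x|} < ⊤)
    (hAE : ∀ᵐ x ∂μ, CauchySeq (fun n => f n x)) :
    ∀ lam : ℝ, 0 < lam → ∀ ε : ℝ, 0 < ε → ∀ F : ℕ → ℕ, ∃ M : ℕ,
      μ {x | ∀ m ≤ M, ∃ n ∈ Set.Icc m (F m), ∃ n' ∈ Set.Icc m (F m),
          ε ≤ |f n x - f n' x|} < ENNReal.ofReal lam := by
  intro lam hlam ε hε F
  let B : ℕ → Set X := fun m => ⋃ n ∈ Set.Icc m (F m), ⋃ n' ∈ Set.Icc m (F m),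
    {x | ε ≤ |f n x - f n' x|}
  let E : ℕ → Set X := fun M => ⋂ m ∈ Set.Iic M, B m
  have hEeq : ∀ M, {x | ∀ m ≤ M, ∃ n ∈ Set.Icc m (F m), ∃ n' ∈ Set.Icc m (F m),
          ε ≤ |f n x - f n' x|} = E M := by
    intro M
    ext x
    simp only [E, B, Set.mem_setOf_eq, Set.mem_iInter, Set.mem_iUnion, Set.mem_Iic, exists_prop]
  have hBm : ∀ m, MeasurableSet (B m) := fun m =>
    MeasurableSet.biUnion (Set.to_countable _) fun n _ =>
      MeasurableSet.biUnion (Set.to_countable _) fun n' _ =>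
        measurableSet_le measurable_const (((hf n).sub (hf n')).abs)
  have hEm : ∀ M, MeasurableSet (E M) := fun M =>
    MeasurableSet.biInter (Set.to_countable _) fun m _ => hBm m
  have hanti : Antitone E := fun a b hab =>
    Set.biInter_subset_biInter_left (Set.Iic_subset_Iic.2 hab)
  have hB0 : μ (B 0) < ⊤ :=
    measure_biUnion_lt_top (Set.finite_Icc _ _) fun n _ =>
      measure_biUnion_lt_top (Set.finite_Icc _ _) fun n' _ => hfin ε hε n n'
  have hE0 : μ (E 0) ≠ ⊤ :=
    ((measure_mono (Set.biInter_subset_of_mem (Set.mem_Iic.2 le_rfl))).trans_lt hB0).ne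
  have hnull : μ (⋂ M, E M) = 0 := by
    refine measure_mono_null ?_ (ae_iff.1 hAE)
    intro x hx hc
    obtain ⟨N, hN⟩ := Metric.cauchySeq_iff.1 hc ε hε
    have h1 : x ∈ E N := Set.mem_iInter.1 hx N
    rw [← hEeq] at h1
    obtain ⟨n, hn, n', hn', h⟩ := h1 N le_rfl
    have h2 := hN n hn.1 n' hn'.1
    rw [Real.dist_eq] at h2
    exact absurd h2 (not_lt.2 h)
  have ht := tendsto_measure_iInter_atTop (μ := μ) (fun M => (hEm M).nullMeasurableSet) hanti
    ⟨0, hE0⟩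
  rw [hnull] at ht
  obtain ⟨M, hM⟩ := (ht.eventually_lt_const (ENNReal.ofReal_pos.2 hlam)).exists
  exact ⟨M, by rw [hEeq]; exact hM⟩
end

section
/- Let (f_n) be a sequence of measurable real-valued functions on a measure space (X, B, μ). If (f_n) converges AUM', then (f_n) converges AUM. -/
open MeasureTheory

theorem stmt_16 {X : Type*} [MeasurableSpace X] (μ : Measure X)
    (f : ℕ → X → ℝ) (hf : ∀ n, Measurable (f n))
    (hAUM' : ∃ g : X → ℝ, Measurable g ∧
      ∀ lam : ℝ, 0 < lam → ∀ ε : ℝ, 0 < ε → ∀ F : ℕ → ℕ, ∃ M : ℕ,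
        μ {x | ∀ m ≤ M, ∃ n ∈ Set.Icc m (F m),
            ε ≤ |f n x - g x|} < ENNReal.ofReal lam) :
    ∀ lam : ℝ, 0 < lam → ∀ ε : ℝ, 0 < ε → ∀ F : ℕ → ℕ, ∃ M : ℕ,
      μ {x | ∀ m ≤ M, ∃ n ∈ Set.Icc m (F m), ∃ n' ∈ Set.Icc m (F m),
          ε ≤ |f n x - f n' x|} < ENNReal.ofReal lam := by
  obtain ⟨g, -, h⟩ := hAUM'
  intro lam hlam ε hε F
  obtain ⟨M, hM⟩ := h lam hlam (ε / 2) (by positivity) F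
  refine ⟨M, lt_of_le_of_lt (measure_mono ?_) hM⟩
  intro x hx m hm
  obtain ⟨n, hn, n', hn', hle⟩ := hx m hm
  by_cases h1 : ε / 2 ≤ |f n x - g x|
  · exact ⟨n, hn, h1⟩
  · refine ⟨n', hn', ?_⟩
    have h2 := abs_sub_le (f n x) (g x) (f n' x)
    rw [abs_sub_comm (g x)] at h2
    push Not at h1
    linarith
end

section
/- On ℝ with Lebesgue measure, the sequence f_n = χ_{[n, n+1]} (the indicator function of the closed interval [n, n+1]) converges AUM but does not converge almost uniformly. -/
open MeasureTheory

theorem stmt_17 :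
    (∀ lam : ℝ, 0 < lam → ∀ ε : ℝ, 0 < ε → ∀ F : ℕ → ℕ, ∃ M : ℕ,
      volume {x : ℝ | ∀ m ≤ M, ∃ n ∈ Set.Icc m (F m), ∃ n' ∈ Set.Icc m (F m),
          ε ≤ |(Set.Icc (n : ℝ) (n + 1)).indicator 1 x -
                (Set.Icc (n' : ℝ) (n' + 1)).indicator 1 x|} < ENNReal.ofReal lam) ∧
    ¬ (∀ lam : ℝ, 0 < lam → ∃ A : Set ℝ, MeasurableSet A ∧
        volume A ≤ ENNReal.ofReal lam ∧
        ∀ ε : ℝ, 0 < ε → ∃ m : ℕ, ∀ n n' : ℕ, m ≤ n → m ≤ n' →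
          ∀ x ∈ Aᶜ, |(Set.Icc (n : ℝ) (n + 1)).indicator 1 x -
                      (Set.Icc (n' : ℝ) (n' + 1)).indicator 1 x| < ε) := by
  refine ⟨?_, ?_⟩
  · intro lam hlam ε hε F
    refine ⟨F 0 + 1, ?_⟩
    refine lt_of_le_of_lt (measure_mono (t := {((F 0 : ℝ) + 1)}) ?_) ?_
    · intro x hx
      have key : ∀ m ≤ F 0 + 1, ∃ k ∈ Set.Icc m (F m), x ∈ Set.Icc (k : ℝ) (k + 1) := by
        intro m hm
        obtain ⟨n, hn, n', hn', h⟩ := hx m hm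
        by_cases h1 : x ∈ Set.Icc (n : ℝ) (n + 1)
        · exact ⟨n, hn, h1⟩
        by_cases h2 : x ∈ Set.Icc (n' : ℝ) (n' + 1)
        · exact ⟨n', hn', h2⟩
        rw [Set.indicator_of_notMem h1, Set.indicator_of_notMem h2] at h
        simp at h
        linarith
      obtain ⟨a, ha, hxa⟩ := key 0 (Nat.zero_le _)
      obtain ⟨b, hb, hxb⟩ := key (F 0 + 1) le_rfl
      have h1 : (a : ℝ) ≤ F 0 := by exact_mod_cast ha.2
      have h2 : (F 0 : ℝ) + 1 ≤ b := by exact_mod_cast hb.1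
      exact le_antisymm (by linarith [hxa.2]) (by linarith [hxb.1])
    · rw [Real.volume_singleton]
      exact ENNReal.ofReal_pos.2 hlam
  · intro H
    obtain ⟨A, -, hA, h⟩ := H (1 / 2) (by norm_num)
    obtain ⟨m, hm⟩ := h 1 one_pos
    have hsub : Set.Ico (m : ℝ) (m + 1) ⊆ A := by
      intro x hx
      by_contra hxA
      have h3 := hm m (m + 1) le_rfl (Nat.le_succ m) x hxA
      have h1 : x ∈ Set.Icc (m : ℝ) (m + 1) := ⟨hx.1, hx.2.le⟩
      have h2 : x ∉ Set.Icc ((m + 1 : ℕ) : ℝ) ((m + 1 : ℕ) + 1) := by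
        intro h4
        have := h4.1
        push_cast at this
        linarith [hx.2]
      rw [Set.indicator_of_mem h1, Set.indicator_of_notMem h2] at h3
      simp at h3
    have h5 := (measure_mono hsub).trans hA
    rw [Real.volume_Ico, ENNReal.ofReal_le_ofReal_iff (by norm_num)] at h5
    linarith
end

section
/- On ℝ with Lebesgue measure, the sequence g_n = (−1)^n · χ_{[n, ∞)} (where χ_{[n, ∞)} is the indicator function of the interval [n, ∞)) converges pointwise almost everywhere (in fact, for every x the sequence (g_n(x)) is Cauchy), but does not converge AUM. -/
open MeasureTheory

theorem stmt_18 :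
    (∀ x : ℝ, CauchySeq (fun n : ℕ =>
        (-1 : ℝ) ^ n * (Set.Ici (n : ℝ)).indicator 1 x)) ∧
    ¬ (∀ lam : ℝ, 0 < lam → ∀ ε : ℝ, 0 < ε → ∀ F : ℕ → ℕ, ∃ M : ℕ,
        volume {x : ℝ | ∀ m ≤ M, ∃ n ∈ Set.Icc m (F m), ∃ n' ∈ Set.Icc m (F m),
            ε ≤ |(-1 : ℝ) ^ n * (Set.Ici (n : ℝ)).indicator 1 x -
                  (-1 : ℝ) ^ n' * (Set.Ici (n' : ℝ)).indicator 1 x|}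
          < ENNReal.ofReal lam) := by
  constructor
  · intro x
    obtain ⟨N, hN⟩ := exists_nat_gt x
    apply Filter.Tendsto.cauchySeq (x := (0 : ℝ))
    apply tendsto_const_nhds.congr'
    filter_upwards [Filter.eventually_ge_atTop N] with n hn
    have h1 : (N : ℝ) ≤ n := by exact_mod_cast hn
    have h2 : x ∉ Set.Ici (n : ℝ) := by
      simp only [Set.mem_Ici, not_le]
      linarith
    rw [Set.indicator_of_notMem h2, mul_zero]
  · intro h
    obtain ⟨M, hM⟩ := h 1 one_pos 1 one_pos (fun m => m + 1)
    have hsub : Set.Ici ((M : ℝ) + 1) ⊆ {x : ℝ | ∀ m ≤ M,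
        ∃ n ∈ Set.Icc m (m + 1), ∃ n' ∈ Set.Icc m (m + 1),
            (1 : ℝ) ≤ |(-1 : ℝ) ^ n * (Set.Ici (n : ℝ)).indicator 1 x -
                  (-1 : ℝ) ^ n' * (Set.Ici (n' : ℝ)).indicator 1 x|} := by
      intro x hx m hm
      have hx' : (M : ℝ) + 1 ≤ x := hx
      have h1 : (m : ℝ) ≤ M := by exact_mod_cast hm
      have ha : x ∈ Set.Ici (m : ℝ) := by
        simp only [Set.mem_Ici]
        linarith
      have hb : x ∈ Set.Ici ((m + 1 : ℕ) : ℝ) := by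
        simp only [Set.mem_Ici]
        push_cast
        linarith
      refine ⟨m, ⟨le_refl _, Nat.le_succ _⟩, m + 1, ⟨Nat.le_succ _, le_refl _⟩, ?_⟩
      rw [Set.indicator_of_mem ha, Set.indicator_of_mem hb]
      have e : (-1 : ℝ) ^ m * (1 : ℝ → ℝ) x - (-1 : ℝ) ^ (m + 1) * (1 : ℝ → ℝ) x
          = (-1) ^ m * 2 := by
        simp only [Pi.one_apply]
        ring
      rw [e, abs_mul, abs_pow]
      norm_num
    have h3 := (measure_mono hsub).trans_lt hM
    rw [Real.volume_Ici] at h3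
    exact not_top_lt h3
end

section
/- On ℝ with Lebesgue measure, the sequence h_n = χ_{[n, ∞)} (the indicator function of the interval [n, ∞)) converges AUM but does not converge AUM'. -/
open MeasureTheory

theorem stmt_19 :
    (∀ lam : ℝ, 0 < lam → ∀ ε : ℝ, 0 < ε → ∀ F : ℕ → ℕ, ∃ M : ℕ,
      volume {x : ℝ | ∀ m ≤ M, ∃ n ∈ Set.Icc m (F m), ∃ n' ∈ Set.Icc m (F m),
          ε ≤ |(Set.Ici (n : ℝ)).indicator 1 x -
                (Set.Ici (n' : ℝ)).indicator 1 x|} < ENNReal.ofReal lam) ∧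
    ¬ (∃ g : ℝ → ℝ, Measurable g ∧
        ∀ lam : ℝ, 0 < lam → ∀ ε : ℝ, 0 < ε → ∀ F : ℕ → ℕ, ∃ M : ℕ,
          volume {x : ℝ | ∀ m ≤ M, ∃ n ∈ Set.Icc m (F m),
              ε ≤ |(Set.Ici (n : ℝ)).indicator 1 x - g x|} < ENNReal.ofReal lam) := by
  constructor
  · intro lam hlam ε hε F
    refine ⟨F 0, ?_⟩
    have hempty : {x : ℝ | ∀ m ≤ F 0, ∃ n ∈ Set.Icc m (F m), ∃ n' ∈ Set.Icc m (F m),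
          ε ≤ |(Set.Ici (n : ℝ)).indicator 1 x -
                (Set.Ici (n' : ℝ)).indicator 1 x|} = ∅ := by
      ext x
      simp only [Set.mem_setOf_eq, Set.mem_empty_iff_false, iff_false]
      intro h
      by_cases hx : (F 0 : ℝ) ≤ x
      · obtain ⟨n, hn, n', hn', hle⟩ := h 0 (Nat.zero_le _)
        have h1 : x ∈ Set.Ici (n : ℝ) := le_trans (Nat.cast_le.mpr hn.2) hx
        have h2 : x ∈ Set.Ici (n' : ℝ) := le_trans (Nat.cast_le.mpr hn'.2) hx
        rw [Set.indicator_of_mem h1, Set.indicator_of_mem h2] at hle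
        simp at hle
        linarith
      · obtain ⟨n, hn, n', hn', hle⟩ := h (F 0) le_rfl
        have h1 : x ∉ Set.Ici (n : ℝ) := fun h => hx (le_trans (Nat.cast_le.mpr hn.1) h)
        have h2 : x ∉ Set.Ici (n' : ℝ) := fun h => hx (le_trans (Nat.cast_le.mpr hn'.1) h)
        rw [Set.indicator_of_notMem h1, Set.indicator_of_notMem h2] at hle
        simp at hle
        linarith
    rw [hempty]
    simpa using hlam
  · rintro ⟨g, -, h⟩
    obtain ⟨M, hM⟩ := h 1 one_pos (1 / 2) (by norm_num) id
    obtain ⟨M', hM'⟩ := h 1 one_pos (1 / 2) (by norm_num) (fun m => m + (M + 2))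
    have hsub : Set.Ico (M : ℝ) (M + 2) ⊆
        {x : ℝ | ∀ m ≤ M, ∃ n ∈ Set.Icc m (id m),
              1 / 2 ≤ |(Set.Ici (n : ℝ)).indicator 1 x - g x|} ∪
        {x : ℝ | ∀ m ≤ M', ∃ n ∈ Set.Icc m (m + (M + 2)),
              1 / 2 ≤ |(Set.Ici (n : ℝ)).indicator 1 x - g x|} := by
      intro x hx
      by_cases hg : 1 / 2 ≤ |1 - g x|
      · left
        intro m hm
        refine ⟨m, ⟨le_rfl, le_rfl⟩, ?_⟩
        have h1 : x ∈ Set.Ici (m : ℝ) := le_trans (Nat.cast_le.mpr hm) hx.1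
        rw [Set.indicator_of_mem h1]
        exact hg
      · right
        intro m hm
        refine ⟨m + (M + 2), ⟨by omega, le_rfl⟩, ?_⟩
        have h1 : x ∉ Set.Ici ((m + (M + 2) : ℕ) : ℝ) := by
          intro h
          have h := Set.mem_Ici.mp h
          push_cast at h
          have := hx.2
          have : (0 : ℝ) ≤ m := Nat.cast_nonneg m
          linarith
        rw [Set.indicator_of_notMem h1, zero_sub, abs_neg]
        have := (abs_lt.mp (not_le.mp hg)).2
        exact le_trans (by linarith) (le_abs_self _)
    have hlt := lt_of_le_of_lt ((measure_mono hsub).trans (measure_union_le _ _))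
      (ENNReal.add_lt_add hM hM')
    rw [Real.volume_Ico, ← ENNReal.ofReal_add zero_le_one zero_le_one] at hlt
    norm_num at hlt
end
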